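/- arXiv:2312.17727 — 2 statements merged into one kernel-verified Lean document; each statement's English description precedes it below -/
import Mathlib

section
/- Let P, Q ∈ Γ[x]⁺ and suppose the set C = {g ∈ Γ : P(g) = Q(g)} is a nonempty proper subset of Γ. Then the set {m ∈ ℕ : P(x_m) = Q(x_m)} is finite; that is, every nonempty proper sub-basic Zar⁺(Γ)-closed subset of Γ contains only finitely many of the elements x_1, x_2, …. -/
/-!
The evaluation `P ↦ P(x_m)` is injective on polynomials whose coefficients do not involve `x_m`.
Each coefficient involves finitely many `x_i`, so if `P(x_m) = Q(x_m)` for infinitely many `m`,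
then `P = Q` in `Γ[x]⁺` and the equation `P(g) = Q(g)` holds for every `g ∈ Γ`.

To prove injectivity, put `b_j = x_m⁻¹ a_{2j+2} x_m`. The relation `w_m = 1` reads
`a_1 b_0 a_3 b_1 ⋯ a_{k-1} b_{k/2-1} = 1`. Accordingly, let `K ⊇ Γ` be a group with elements `b_j`
satisfying this relation that freely generate a subgroup `A` with `A ∩ Γ = 1`
(`exists_overgroup`). The elements `a_2, a_4, …, a_k` freely generate a subgroup of `Γ`
(`exists_retraction`), so there is an HNN extension `L` of `K` whose stable letter `t` satisfies
`t⁻¹ a_{2j+2} t = b_j`. Then `x_m ↦ t`, with all other generators fixed, defines a homomorphism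
`Γ → L` that sends `P(x_m)` to `P(t)` when the coefficients of `P` do not involve `x_m`.

Finally `P ↦ P(t)` is injective (`evalStable_injective`): in `P(t) Q(t)⁻¹` the only place where
the sign of the exponent of `t` changes is between the last coefficient `p` of `P` and the last
coefficient `q` of `Q`, so by Britton's lemma `p q⁻¹ ∈ A ∩ Γ = 1`, and one cancels and repeats.

The group `K` is `Γ × (F ⋊ Aut F)` with `F` free on `c_0, c_1, …`. The second coordinate of `Γ → K`
has `a_1 ↦ τ`, `a_3 ↦ τ⁻¹`, all other generators trivial, where `τ` is an automorphism of `F` with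
`τ(c_0) c_1 ⋯ c_{k/2-1} = 1`; the second coordinate of `b_j` is `c_j`.
-/

/-- Evaluation of an element of `G * ⟨x⟩` (the free product of a group `G` with an
infinite cyclic group) at an element `g : G`, substituting `g` for `x`. -/
noncomputable def groupEval {G : Type*} [Group G] (g : G) :
    Monoid.Coprod G (Multiplicative ℤ) →* G :=
  Monoid.Coprod.lift (MonoidHom.id G) (zpowersHom G g)

/-- Evaluation of an element of `M * ⟨x⟩⁺` (the free product of a monoid `M` with the free
monogenic monoid) at an element `m : M`, substituting `m` for `x`. -/
noncomputable def monoidEval {M : Type*} [Monoid M] (m : M) :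
    Monoid.Coprod M (Multiplicative ℕ) →* M :=
  Monoid.Coprod.lift (MonoidHom.id M) (powersHom M m)

/-- The group Zariski topology `Zar(G)`. -/
noncomputable def zariskiGroup (G : Type*) [Group G] : TopologicalSpace G :=
  TopologicalSpace.generateFrom
    {s | ∃ W : Monoid.Coprod G (Multiplicative ℤ), s = {g : G | groupEval g W ≠ 1}}

/-- The semigroup Zariski topology `Zar⁺(M)`. -/
noncomputable def zariskiSemigroup (M : Type*) [Monoid M] : TopologicalSpace M :=
  TopologicalSpace.generateFrom
    {s | ∃ W V : Monoid.Coprod M (Multiplicative ℕ),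
      s = {m : M | monoidEval m W ≠ monoidEval m V}}


/-- The alphabet `B = {a_1, …, a_{k+1}} ∪ {x_1, x_2, …}`. -/
abbrev Alphabet (k : ℕ) := Fin (k + 1) ⊕ ℕ

/-- The generator `a_{j+1}` of the free group on `B` (0-indexed: `gena k 0 = a_1`, …,
`gena k k = a_{k+1}`); indices are taken mod `k+1`. -/
def gena (k j : ℕ) : FreeGroup (Alphabet k) :=
  FreeGroup.of (Sum.inl ⟨j % (k + 1), Nat.mod_lt _ (Nat.succ_pos k)⟩)

/-- The generator `x_i` of the free group on `B`. -/
def genx (k i : ℕ) : FreeGroup (Alphabet k) :=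
  FreeGroup.of (Sum.inr i)

/-- The relator `w_i = a_1 x_i⁻¹ a_2 x_i a_3 x_i⁻¹ a_4 x_i ⋯ a_{k-1} x_i⁻¹ a_k x_i`. -/
def relw (k i : ℕ) : FreeGroup (Alphabet k) :=
  ((List.range (k / 2)).map
    (fun l => gena k (2 * l) * (genx k i)⁻¹ * gena k (2 * l + 1) * genx k i)).prod

/-- The set of relators `{w_i : i ∈ ℕ}`. -/
def rels (k : ℕ) : Set (FreeGroup (Alphabet k)) := Set.range (relw k)

/-- The group `Γ = ⟨B ∣ w_1, w_2, …⟩`. -/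
abbrev Gamma (k : ℕ) := PresentedGroup (rels k)

/-- The image `a_{j+1}` in `Γ` (0-indexed). -/
def aΓ (k j : ℕ) : Gamma k := PresentedGroup.of (Sum.inl ⟨j % (k + 1), Nat.mod_lt _ (Nat.succ_pos k)⟩)

/-- The image `x_i` in `Γ`. -/
def xΓ (k i : ℕ) : Gamma k := PresentedGroup.of (Sum.inr i)

/-- The set `X = {x_1, x_2, …} ⊆ Γ`. -/
def Xset (k : ℕ) : Set (Gamma k) := Set.range (xΓ k)

/-! ### Normal form of polynomials -/

open Monoid.Coprod in
/-- The polynomial `g_n x ⋯ g_1 x g_0` in normal form, with coefficients listed from the right: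
`g = g_0` is the last coefficient and `l = [g_1, …, g_n]` the preceding ones. -/
def polyOf {G : Type*} [Group G] (g : G) : List G → Monoid.Coprod G (Multiplicative ℕ)
  | [] => inl g
  | h :: l => polyOf h l * inr (Multiplicative.ofAdd 1) * inl g

open Monoid.Coprod in
theorem exists_polyOf_mul {G : Type*} [Group G] (g g' : G) (l l' : List G) :
    ∃ g'' l'', polyOf g l * polyOf g' l' = polyOf g'' l'' := by
  induction l' generalizing g' with
  | nil =>
    cases l with
    | nil => exact ⟨g * g', [], by simp [polyOf]⟩
    | cons h l => exact ⟨g * g', h :: l, by simp [polyOf, mul_assoc]⟩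
  | cons h l' ih =>
    obtain ⟨g'', l'', e⟩ := ih h
    exact ⟨g', g'' :: l'', by simp only [polyOf, ← e, mul_assoc]⟩

open Monoid.Coprod in
theorem exists_eq_polyOf {G : Type*} [Group G] (P : Monoid.Coprod G (Multiplicative ℕ)) :
    ∃ g l, P = polyOf g l := by
  induction P using Monoid.Coprod.induction_on with
  | inl g => exact ⟨g, [], rfl⟩
  | inr n =>
    induction n using Multiplicative.rec with | _ n
    induction n with
    | zero => exact ⟨1, [], by simp [polyOf]⟩
    | succ n ih =>
      obtain ⟨g, l, e⟩ := ih
      obtain ⟨g', l', e'⟩ := exists_polyOf_mul g 1 l [1]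
      refine ⟨g', l', ?_⟩
      rw [← e', ← e, ofAdd_add, map_mul]
      simp [polyOf]
  | mul p q hp hq =>
    obtain ⟨g, l, rfl⟩ := hp
    obtain ⟨g', l', rfl⟩ := hq
    exact exists_polyOf_mul _ _ _ _

/-! ### Evaluation at a stable letter -/

open HNNExtension in
/-- Evaluation of a polynomial over `G` at the stable letter of an HNN extension of an
overgroup `ι : G → K`. -/
noncomputable def evalStable {G K : Type*} [Group G] [Group K] (ι : G →* K) {A B : Subgroup K}
    (φ : A ≃* B) : Monoid.Coprod G (Multiplicative ℕ) →* HNNExtension K A B φ :=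
  Monoid.Coprod.lift (of.comp ι) (powersHom _ t)

open HNNExtension in
theorem evalStable_polyOf_nil {G K : Type*} [Group G] [Group K] (ι : G →* K) {A B : Subgroup K}
    (φ : A ≃* B) (g : G) : evalStable ι φ (polyOf g []) = of (ι g) := by
  simp [evalStable, polyOf]

open HNNExtension in
theorem evalStable_polyOf_cons {G K : Type*} [Group G] [Group K] (ι : G →* K)
    {A B : Subgroup K} (φ : A ≃* B) (g h : G) (l : List G) :
    evalStable ι φ (polyOf g (h :: l)) = evalStable ι φ (polyOf h l) * t * of (ι g) := by
  simp [evalStable, polyOf]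

open HNNExtension in
/-- The inverse of the value `g_n t ⋯ t g_0` is `g_0⁻¹ t⁻¹ ⋯ t⁻¹ g_n⁻¹`, a word in which only
`t⁻¹` occurs and which is therefore reduced. -/
def invWord {G K : Type*} [Group G] [Group K] (ι : G →* K) (A B : Subgroup K)
    (g : G) (l : List G) : NormalWord.ReducedWord K A B where
  head := (ι g)⁻¹
  toList := l.map fun h => (-1, (ι h)⁻¹)
  chain := by
    rw [List.isChain_map]
    exact (List.pairwise_of_forall fun _ _ _ => rfl).isChain

open HNNExtension in
theorem invWord_prod {G K : Type*} [Group G] [Group K] (ι : G →* K) {A B : Subgroup K}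
    (φ : A ≃* B) (g : G) (l : List G) :
    (invWord ι A B g l).prod φ = (evalStable ι φ (polyOf g l))⁻¹ := by
  induction l generalizing g with
  | nil => simp [invWord, NormalWord.ReducedWord.prod, evalStable_polyOf_nil]
  | cons h l ih =>
    rw [evalStable_polyOf_cons, mul_inv_rev, mul_inv_rev, ← ih h]
    simp [invWord, NormalWord.ReducedWord.prod, mul_assoc]

open HNNExtension in
/-- Britton's lemma strips the coefficients off two equal values one at a time from the right:
the last two coefficients differ by an element of `A ∩ ι(G) = 1`. -/
theorem evalStable_injective {G K : Type*} [Group G] [Group K] (ι : G →* K)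
    (hι : Function.Injective ι) {A B : Subgroup K} (φ : A ≃* B) (hA : ∀ g, ι g ∈ A → g = 1) :
    Function.Injective (evalStable ι φ) := by
  have key : ∀ (l l' : List G) (g g' : G),
      evalStable ι φ (polyOf g l) = evalStable ι φ (polyOf g' l') → g = g' ∧ l = l' := by
    intro l
    induction l with
    | nil =>
      intro l' g g' h
      have h' : (invWord ι A B g []).prod φ = (invWord ι A B g' l').prod φ := by
        rw [invWord_prod, invWord_prod, h]
      have := (ReducedWord.map_fst_eq_and_of_prod_eq φ h').1
      obtain rfl : l' = [] := by simpa [invWord] using this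
      rw [evalStable_polyOf_nil, evalStable_polyOf_nil] at h
      exact ⟨hι (of_injective φ h), rfl⟩
    | cons a l ih =>
      intro l' g g' h
      have h' : (invWord ι A B g (a :: l)).prod φ = (invWord ι A B g' l').prod φ := by
        rw [invWord_prod, invWord_prod, h]
      obtain ⟨h1, h2⟩ := ReducedWord.map_fst_eq_and_of_prod_eq φ h'
      cases l' with
      | nil => simp [invWord] at h1
      | cons a' l' =>
        have h3 : ι (g * g'⁻¹) ∈ A := by
          have := h2 (-1) (by simp [invWord])
          simpa [invWord] using this
        obtain rfl : g = g' := mul_inv_eq_one.1 (hA _ h3)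
        rw [evalStable_polyOf_cons, evalStable_polyOf_cons] at h
        obtain ⟨rfl, rfl⟩ := ih l' a a' (mul_right_cancel (mul_right_cancel h))
        exact ⟨rfl, rfl⟩
  intro P Q h
  obtain ⟨g, l, rfl⟩ := exists_eq_polyOf P
  obtain ⟨g', l', rfl⟩ := exists_eq_polyOf Q
  obtain ⟨rfl, rfl⟩ := key _ _ _ _ h
  rfl

/-! ### Homomorphisms from `Γ` -/

/-- The value of the relator `w_i` under `a_{j+1} ↦ α j`, `x_m ↦ ξ m`. -/
theorem lift_relw {G : Type*} [Group G] (k i : ℕ) (α ξ : ℕ → G) :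
    FreeGroup.lift (Sum.elim (fun j : Fin (k + 1) => α j) ξ) (relw k i) =
      ((List.range (k / 2)).map
        fun l => α (2 * l) * (ξ i)⁻¹ * α (2 * l + 1) * ξ i).prod := by
  rw [relw, map_list_prod, List.map_map]
  congr 1
  refine List.map_congr_left fun l hl => ?_
  have hl' : l < k / 2 := List.mem_range.1 hl
  simp only [Function.comp_apply, map_mul, map_inv, gena, genx, FreeGroup.lift_apply_of,
    Sum.elim_inl, Sum.elim_inr]
  rw [Nat.mod_eq_of_lt (by omega), Nat.mod_eq_of_lt (by omega)]

/-- The homomorphism from `Γ` given by the images `α j` of `a_{j+1}` and `ξ m` of `x_m`. -/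
theorem exists_hom_of_relations {G : Type*} [Group G] (k : ℕ) (α ξ : ℕ → G)
    (h : ∀ i, ((List.range (k / 2)).map
        fun l => α (2 * l) * (ξ i)⁻¹ * α (2 * l + 1) * ξ i).prod = 1) :
    ∃ f : Gamma k →* G, (∀ j ≤ k, f (aΓ k j) = α j) ∧ ∀ i, f (xΓ k i) = ξ i := by
  refine ⟨PresentedGroup.toGroup (f := Sum.elim (fun j : Fin (k + 1) => α j) ξ) ?_, ?_, ?_⟩
  · rintro _ ⟨i, rfl⟩
    rw [lift_relw, h]
  · intro j hj
    simp [aΓ, Nat.mod_eq_of_lt (Nat.lt_succ_of_le hj)]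
  · intro i
    simp [xΓ]

theorem gamma_closure_induction {k : ℕ} {p : Gamma k → Prop}
    (ha : ∀ j ≤ k, p (aΓ k j)) (hx : ∀ i, p (xΓ k i)) (one : p 1)
    (mul : ∀ g h, p g → p h → p (g * h)) (inv : ∀ g, p g → p g⁻¹) (g : Gamma k) : p g := by
  let H : Subgroup (Gamma k) :=
    { carrier := {g | p g}
      one_mem' := one
      mul_mem' := fun {a b} => mul a b
      inv_mem' := fun {a} => inv a }
  refine PresentedGroup.generated_by (rels k) H ?_ g
  rintro (j | i)
  · have := ha j (Nat.lt_succ_iff.1 j.2)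
    simp only [aΓ, Nat.mod_eq_of_lt j.2] at this
    exact this
  · exact hx i

theorem gamma_relation (k i : ℕ) :
    ((List.range (k / 2)).map fun l =>
      aΓ k (2 * l) * (xΓ k i)⁻¹ * aΓ k (2 * l + 1) * xΓ k i).prod = 1 := by
  have h : PresentedGroup.mk (rels k) (relw k i) = 1 :=
    PresentedGroup.one_of_mem ⟨i, rfl⟩
  rw [relw, map_list_prod, List.map_map] at h
  rw [← h]
  rfl

/-- `a_2, a_4, …, a_k` freely generate a retract of `Γ`: send every `x_i` and every `a_j` with
`j > 1` odd to `1`, and `a_1` to the inverse of the product of the basis. -/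
theorem exists_retraction (k N : ℕ) (hN : k / 2 = N + 2) :
    ∃ ρ : Gamma k →* FreeGroup ℕ, ∀ j < k / 2, ρ (aΓ k (2 * j + 1)) = FreeGroup.of j := by
  let D : FreeGroup ℕ := ((List.range (N + 1)).map fun l => FreeGroup.of (l + 1)).prod
  let α : ℕ → FreeGroup ℕ := fun j =>
    if j = 0 then (FreeGroup.of 0 * D)⁻¹ else if j % 2 = 1 then FreeGroup.of (j / 2) else 1
  have hodd : ∀ l, α (2 * l + 1) = FreeGroup.of l := by
    intro l
    have h1 : (2 * l + 1) % 2 = 1 := by omega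
    have h2 : (2 * l + 1) / 2 = l := by omega
    simp [α, h1, h2]
  have heven : ∀ l, α (2 * (l + 1)) = 1 := by
    intro l
    simp [α]
  obtain ⟨ρ, h1, -⟩ := exists_hom_of_relations k α 1 (by
    intro i
    rw [hN, List.range_succ_eq_map]
    simp only [List.map_cons, List.map_map, List.prod_cons, Function.comp_def, Nat.succ_eq_add_one,
      hodd, heven, Pi.one_apply, inv_one, mul_one, one_mul]
    change α 0 * FreeGroup.of 0 * D = 1
    simp [α])
  exact ⟨ρ, fun j hj => by rw [h1 _ (by omega), hodd]⟩

/-- The free group of infinite rank has an automorphism `τ` with `τ(c_0) c_1 ⋯ c_{N+1} = 1`: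
take `c_0 ↦ (c_1 ⋯ c_{N+1})⁻¹`, `c_1 ↦ c_0`, and fix the other generators. -/
theorem exists_automorphism (N : ℕ) :
    ∃ τ : MulAut (FreeGroup ℕ),
      τ (FreeGroup.of 0) * ((List.range (N + 1)).map fun l => FreeGroup.of (l + 1)).prod = 1 := by
  let D : FreeGroup ℕ := ((List.range N).map fun l => FreeGroup.of (l + 2)).prod
  let f : FreeGroup ℕ →* FreeGroup ℕ := FreeGroup.lift fun j =>
    if j = 0 then (FreeGroup.of 1 * D)⁻¹ else if j = 1 then FreeGroup.of 0 else FreeGroup.of j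
  let g : FreeGroup ℕ →* FreeGroup ℕ := FreeGroup.lift fun j =>
    if j = 0 then FreeGroup.of 1 else if j = 1 then (D * FreeGroup.of 0)⁻¹ else FreeGroup.of j
  have hfD : f D = D := by
    simp [D, f, map_list_prod, Function.comp_def]
  have hgD : g D = D := by
    simp [D, g, map_list_prod, Function.comp_def]
  have hf0 : f (FreeGroup.of 0) = (FreeGroup.of 1 * D)⁻¹ := by simp [f]
  have hf1 : f (FreeGroup.of 1) = FreeGroup.of 0 := by simp [f]
  have hg0 : g (FreeGroup.of 0) = FreeGroup.of 1 := by simp [g]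
  have hg1 : g (FreeGroup.of 1) = (D * FreeGroup.of 0)⁻¹ := by simp [g]
  have hgf : g.comp f = MonoidHom.id _ := by
    ext j
    rcases j with _ | _ | j
    · simp [hf0, hg1, hgD]
    · simp [hf1, hg0]
    · simp [f, g]
  have hfg : f.comp g = MonoidHom.id _ := by
    ext j
    rcases j with _ | _ | j
    · simp [hg0, hf1]
    · simp [hf0, hg1, hfD]
    · simp [f, g]
  refine ⟨MonoidHom.toMulEquiv f g hgf hfg, ?_⟩
  change f (FreeGroup.of 0) * _ = 1
  rw [List.range_succ_eq_map, hf0]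
  simp [D, Function.comp_def]

/-- A homomorphism `η` from `Γ` to `F ⋊ Aut F`, `F` free on `c_0, c_1, …`, whose image lies in the
complement `Aut F` although `η(a_1) c_0 η(a_3) c_1 ⋯ η(a_{k-1}) c_{k/2-1} = 1`: take `a_1 ↦ τ`,
`a_3 ↦ τ⁻¹` and all other generators to `1`. -/
theorem exists_hom_semidirect (k N : ℕ) (hN : k / 2 = N + 2) :
    ∃ η : Gamma k →* FreeGroup ℕ ⋊[MonoidHom.id (MulAut (FreeGroup ℕ))] MulAut (FreeGroup ℕ),
      (∀ g, (η g).left = 1) ∧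
      ((List.range (k / 2)).map fun l =>
        η (aΓ k (2 * l)) * SemidirectProduct.inl (FreeGroup.of l)).prod = 1 := by
  obtain ⟨τ, hτ⟩ := exists_automorphism N
  let α : ℕ → MulAut (FreeGroup ℕ) := fun j => if j = 0 then τ else if j = 2 then τ⁻¹ else 1
  have h0 : α 0 = τ := by simp [α]
  have h2 : α 2 = τ⁻¹ := by simp [α]
  have hodd : ∀ l, α (2 * l + 1) = 1 := by
    intro l
    have h : 2 * l + 1 ≠ 2 := by omega
    simp [α, h]
  have heven : ∀ l, α (2 * (l + 1 + 1)) = 1 := by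
    intro l
    have h : 2 * (l + 1 + 1) ≠ 2 := by omega
    simp [α, h]
  obtain ⟨η, h1, -⟩ := exists_hom_of_relations k α 1 (by
    intro i
    rw [hN, List.range_succ_eq_map, List.range_succ_eq_map]
    simp [Function.comp_def, hodd, heven, h0, h2])
  refine ⟨SemidirectProduct.inr.comp η, fun g => rfl, ?_⟩
  have h3 : ((List.range (k / 2)).map fun l =>
        (SemidirectProduct.inr.comp η) (aΓ k (2 * l)) * SemidirectProduct.inl (FreeGroup.of l)) =
      (List.range (k / 2)).map fun l =>
        (SemidirectProduct.inr (α (2 * l)) * SemidirectProduct.inl (FreeGroup.of l) :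
          FreeGroup ℕ ⋊[MonoidHom.id (MulAut (FreeGroup ℕ))] MulAut (FreeGroup ℕ)) := by
    refine List.map_congr_left fun l hl => ?_
    have := List.mem_range.1 hl
    rw [MonoidHom.comp_apply, h1 _ (by omega)]
  rw [h3, hN, List.range_succ_eq_map, List.range_succ_eq_map]
  have h4 := congrArg (SemidirectProduct.inl
    (φ := MonoidHom.id (MulAut (FreeGroup ℕ)))) hτ
  have h5 := SemidirectProduct.inl_aut (φ := MonoidHom.id (MulAut (FreeGroup ℕ))) τ
    (FreeGroup.of 0)
  rw [MonoidHom.id_apply] at h5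
  rw [map_mul, h5, List.range_succ_eq_map] at h4
  simp only [List.map_cons, List.map_map, List.prod_cons, Function.comp_def, Nat.succ_eq_add_one,
    map_mul, map_one, map_list_prod, heven, one_mul, mul_one, mul_zero, zero_add, h0, h2,
    mul_assoc] at h4 ⊢
  exact h4

/-! ### The overgroup and its HNN extension -/

/-- An overgroup `ι : Γ → K` and elements `b_0, …, b_{k/2-1}` of `K` that satisfy
`a_1 b_0 a_3 b_1 ⋯ a_{k-1} b_{k/2-1} = 1` and freely generate a subgroup meeting `ι(Γ)`
trivially. Here `K = Γ × (F ⋊ Aut F)`: the second coordinate of `b_j` is `c_j`, and the first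
coordinate of `b_0` is chosen to make the relation true. -/
theorem exists_overgroup (k N : ℕ) (hN : k / 2 = N + 2) :
    ∃ (K : Type) (_ : Group K) (ι : Gamma k →* K) (b : ℕ → K),
      Function.Injective ι ∧
      ((List.range (k / 2)).map fun l => ι (aΓ k (2 * l)) * b l).prod = 1 ∧
      ∀ u : FreeGroup (Fin (k / 2)),
        FreeGroup.lift (fun j : Fin (k / 2) => b j) u ∈ ι.range → u = 1 := by
  obtain ⟨η, hη, hrel⟩ := exists_hom_semidirect k N hN
  let D : Gamma k := ((List.range (N + 1)).map fun l => aΓ k (2 * (l + 1))).prod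
  let β : ℕ → Gamma k := fun j => if j = 0 then (D * aΓ k 0)⁻¹ else 1
  let b := fun j : ℕ => (β j, (SemidirectProduct.inl (FreeGroup.of j) :
    FreeGroup ℕ ⋊[MonoidHom.id (MulAut (FreeGroup ℕ))] MulAut (FreeGroup ℕ)))
  refine ⟨_, inferInstance, (MonoidHom.id _).prod η, b, ?_, ?_, ?_⟩
  · intro g h e
    exact congrArg Prod.fst e
  · refine Prod.ext ?_ ?_
    · rw [← MonoidHom.coe_fst, map_list_prod, List.map_map, hN, List.range_succ_eq_map]
      simp only [List.map_cons, List.map_map, List.prod_cons, Function.comp_def,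
        Nat.succ_eq_add_one]
      change aΓ k 0 * β 0 * ((List.range (N + 1)).map fun l => aΓ k (2 * (l + 1)) * 1).prod = 1
      simp only [mul_one]
      change aΓ k 0 * β 0 * D = 1
      simp [β]
    · rw [← MonoidHom.coe_snd, map_list_prod, List.map_map]
      exact hrel
  · rintro u ⟨g, hg⟩
    have h1 : (MonoidHom.snd _ _).comp (FreeGroup.lift fun j : Fin (k / 2) => b j) =
        SemidirectProduct.inl.comp (FreeGroup.map Fin.val) := by
      ext j <;> simp [b]
    have h2 := DFunLike.congr_fun h1 u
    rw [MonoidHom.comp_apply, ← hg] at h2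
    have h3 : FreeGroup.map Fin.val u = 1 := by
      rw [← hη g]
      exact (congrArg SemidirectProduct.left h2).symm
    exact FreeGroup.map_injective Fin.val_injective (by rw [h3, map_one])

open HNNExtension in
/-- An injective evaluation `ev` of `Γ[x]⁺` at an element of a group `L` such that, for all but
finitely many `m`, the equation `P(x_m) = Q(x_m)` forces `ev P = ev Q`. -/
theorem exists_injective_eval (k N : ℕ) (hN : k / 2 = N + 2) :
    ∃ (L : Type) (_ : Group L) (ev : Monoid.Coprod (Gamma k) (Multiplicative ℕ) →* L)
      (Ψ : ℕ → Gamma k →* L), Function.Injective ev ∧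
      ∀ P, ∀ᶠ m in Filter.cofinite, Ψ m (monoidEval (xΓ k m) P) = ev P := by
  obtain ⟨K, _, ι, b, hι, hrel, hb⟩ := exists_overgroup k N hN
  obtain ⟨ρ, hρ⟩ := exists_retraction k N hN
  let fA : FreeGroup (Fin (k / 2)) →* K := FreeGroup.lift fun j => b j
  let f : FreeGroup (Fin (k / 2)) →* Gamma k := FreeGroup.lift fun j => aΓ k (2 * j + 1)
  have hfA : Function.Injective fA := by
    refine (injective_iff_map_eq_one fA).2 fun u hu => hb u ?_
    change fA u ∈ _
    rw [hu]
    exact one_mem _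
  have hf : Function.Injective f := by
    have h : ρ.comp f = FreeGroup.map Fin.val := by
      ext j
      simp [f, hρ j j.2]
    have h' : Function.Injective (ρ.comp f) := by
      rw [h]
      exact FreeGroup.map_injective Fin.val_injective
    exact Function.Injective.of_comp (f := ρ) h'
  let fB : FreeGroup (Fin (k / 2)) →* K := ι.comp f
  have hfB : Function.Injective fB := hι.comp hf
  -- The stable letter conjugates `b_j` to `a_{2j+2}`.
  let φ : fA.range ≃* fB.range := (MonoidHom.ofInjective hfA).symm.trans (MonoidHom.ofInjective hfB)
  have hφ : ∀ j < k / 2, (t⁻¹ * of (ι (aΓ k (2 * j + 1))) * t : HNNExtension K _ _ φ) =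
      of (b j) := by
    intro j hj
    have h1 : φ (MonoidHom.ofInjective hfA (FreeGroup.of ⟨j, hj⟩)) =
        MonoidHom.ofInjective hfB (FreeGroup.of ⟨j, hj⟩) := by
      simp [φ]
    have h2 := equiv_symm_eq_conj (φ := φ) (MonoidHom.ofInjective hfB (FreeGroup.of ⟨j, hj⟩))
    rw [← h1, MulEquiv.symm_apply_apply, h1] at h2
    rw [MonoidHom.ofInjective_apply, MonoidHom.ofInjective_apply] at h2
    simpa [fA, fB, f] using h2.symm
  have hψ : ∀ m : ℕ, ∃ ψ : Gamma k →* HNNExtension K _ _ φ,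
      (∀ j ≤ k, ψ (aΓ k j) = of (ι (aΓ k j))) ∧
      ∀ i, ψ (xΓ k i) = if i = m then t else of (ι (xΓ k i)) := by
    intro m
    refine exists_hom_of_relations k (fun j => of (ι (aΓ k j)))
      (fun i => if i = m then t else of (ι (xΓ k i))) fun i => ?_
    by_cases hi : i = m
    · simp only [hi, if_true]
      have h := congrArg (of (φ := φ)) hrel
      rw [map_list_prod, List.map_map, map_one] at h
      rw [← h]
      congr 1
      refine List.map_congr_left fun l hl => ?_
      rw [Function.comp_apply, map_mul, ← hφ l (List.mem_range.1 hl)]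
      simp only [mul_assoc]
    · simp only [hi, if_false]
      have h := congrArg ((of (φ := φ)).comp ι) (gamma_relation k i)
      rw [map_list_prod, List.map_map, map_one] at h
      rw [← h]
      congr 1
      refine List.map_congr_left fun l _ => ?_
      simp
  choose Ψ hΨa hΨx using hψ
  refine ⟨_, inferInstance, evalStable ι φ, Ψ, evalStable_injective ι hι φ ?_, ?_⟩
  · rintro g ⟨u, hu⟩
    have h : u = 1 := hb u ⟨g, hu.symm⟩
    rw [h, map_one] at hu
    exact hι (by rw [← hu, map_one])
  · have hcoef : ∀ g : Gamma k, ∀ᶠ m in Filter.cofinite, Ψ m g = of (ι g) := by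
      refine gamma_closure_induction ?_ ?_ ?_ ?_ ?_
      · exact fun j hj => Filter.Eventually.of_forall fun m => hΨa m j hj
      · intro i
        filter_upwards [(Set.finite_singleton i).compl_mem_cofinite] with m hm
        rw [hΨx, if_neg (fun h => hm h.symm)]
      · simp
      · intro g h hg hh
        filter_upwards [hg, hh] with m h1 h2
        simp [h1, h2]
      · intro g hg
        filter_upwards [hg] with m h1
        simp [h1]
    intro P
    induction P using Monoid.Coprod.induction_on with
    | inl g =>
      filter_upwards [hcoef g] with m hm
      simp [monoidEval, evalStable, hm]
    | inr n =>
      refine Filter.Eventually.of_forall fun m => ?_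
      simp [monoidEval, evalStable, hΨx, powersHom_apply]
    | mul p q hp hq =>
      filter_upwards [hp, hq] with m h1 h2
      simp [h1, h2]

/-- If `P, Q ∈ Γ[x]⁺` and `C = {g ∈ Γ : P(g) = Q(g)}` is a nonempty proper subset of `Γ`,
then `P(x_m) = Q(x_m)` holds for only finitely many `m`; i.e. every nonempty proper
sub-basic `Zar⁺(Γ)`-closed set contains only finitely many of the `x_m`. -/
theorem subbasic_closed_meets_finitely_many_x (k : ℕ) (hk8 : 8 ≤ k) (hke : Even k)
    (P Q : Monoid.Coprod (Gamma k) (Multiplicative ℕ))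
    (hne : {g : Gamma k | monoidEval g P = monoidEval g Q}.Nonempty)
    (hproper : {g : Gamma k | monoidEval g P = monoidEval g Q} ≠ Set.univ) :
    {m : ℕ | monoidEval (xΓ k m) P = monoidEval (xΓ k m) Q}.Finite := by
  obtain ⟨N, hN⟩ : ∃ N, k / 2 = N + 2 := ⟨k / 2 - 2, by omega⟩
  obtain ⟨L, _, ev, Ψ, hinj, hev⟩ := exists_injective_eval k N hN
  by_contra hinf
  have hfreq : ∃ᶠ m in Filter.cofinite, monoidEval (xΓ k m) P = monoidEval (xΓ k m) Q :=
    Filter.frequently_cofinite_iff_infinite.2 hinf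
  obtain ⟨m, hm, hP, hQ⟩ := (hfreq.and_eventually ((hev P).and (hev Q))).exists
  have hPQ : P = Q := hinj (by rw [← hP, ← hQ, hm])
  exact hproper (by simp [hPQ])
end

section
/- Let S be the monoid with zero presented by generators x_1, x_2, …, y_1, y_2, … and relations x_i y_i = 0 for all i. Then the multiplication map S × S → S is not continuous when S carries the semigroup Zariski topology Zar⁺(S) and S × S carries the corresponding product topology; in other words, Zar⁺(S) is not a semigroup topology on S. -/
/-- The base monoid with zero: `WithZero (FreeMonoid (ℕ ⊕ ℕ))`, whose nonzero elements are
words in the generators `x_i` (left copy of `ℕ`) and `y_i` (right copy of `ℕ`). -/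
abbrev BaseS : Type := WithZero (FreeMonoid (ℕ ⊕ ℕ))

/-- The generator `x_i` in the base monoid. -/
def xBase (i : ℕ) : BaseS := ↑(FreeMonoid.of (Sum.inl i : ℕ ⊕ ℕ))

/-- The generator `y_i` in the base monoid. -/
def yBase (i : ℕ) : BaseS := ↑(FreeMonoid.of (Sum.inr i : ℕ ⊕ ℕ))

/-- The defining relations: `x_i · y_i = 0` for every `i`. -/
def xyRel : BaseS → BaseS → Prop := fun a b =>
  ∃ i : ℕ, a = xBase i * yBase i ∧ b = 0

/-- The monoid congruence generated by the relations `x_i · y_i = 0`. -/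
def Scon : Con BaseS := conGen xyRel

/-- The monoid `S = ⟨x_1, x_2, …, y_1, y_2, … ∣ x_i y_i = 0⟩`. -/
abbrev Smon : Type := Scon.Quotient

/-- The image of the generator `x_i` in `S`. -/
def xS (i : ℕ) : Smon := Scon.mk' (xBase i)

/-- The image of the generator `y_i` in `S`. -/
def yS (i : ℕ) : Smon := Scon.mk' (yBase i)

/-- The image of the zero element in `S`. -/
def zS : Smon := Scon.mk' 0

open Filter Topology

/-- The images of the generators under the substitution `x_i ↦ a`, `y_i ↦ b` that leaves all
other generators unchanged. -/
def substGen (i : ℕ) (a b : BaseS) : ℕ ⊕ ℕ → BaseS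
  | Sum.inl j => if j = i then a else xBase j
  | Sum.inr j => if j = i then b else yBase j

/-- The endomorphism of the base monoid with zero extending `substGen`. -/
noncomputable def substBase (i : ℕ) (a b : BaseS) : BaseS →*₀ BaseS :=
  WithZero.lift' (FreeMonoid.lift (substGen i a b))

lemma substBase_x (i : ℕ) (a b : BaseS) (j : ℕ) :
    substBase i a b (xBase j) = if j = i then a else xBase j := by
  simp [substBase, xBase, substGen]

lemma substBase_y (i : ℕ) (a b : BaseS) (j : ℕ) :
    substBase i a b (yBase j) = if j = i then b else yBase j := by
  simp [substBase, yBase, substGen]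

lemma xS_mul_yS (i : ℕ) : xS i * yS i = zS := by
  have h : Scon (xBase i * yBase i) 0 := ConGen.Rel.of _ _ ⟨i, rfl, rfl⟩
  exact (Con.eq Scon).2 h

lemma one_ne_zS : (1 : Smon) ≠ zS := by
  -- Sending every generator to `0 : ℕ` respects the relations and separates `1` from `0`.
  let f : BaseS →*₀ ℕ := WithZero.lift' (FreeMonoid.lift fun _ => 0)
  have hle : Scon ≤ Con.ker f.toMonoidHom := by
    refine Con.conGen_le.2 ?_
    rintro _ _ ⟨i, rfl, rfl⟩
    simp [Con.ker_rel, f, xBase]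
  intro h
  have h1 : Scon 1 0 := (Con.eq Scon).1 h
  simpa [Con.ker_rel] using hle h1

/-- The endomorphism of `S` sending `x_i ↦ a`, `y_i ↦ b` and fixing all other generators; it is
well defined when `a * b = 0`. -/
noncomputable def substS (i : ℕ) (a b : BaseS) (hab : a * b = 0) : Smon →* Smon :=
  Scon.lift (Scon.mk'.comp (substBase i a b).toMonoidHom) <| by
    refine Con.conGen_le.2 ?_
    rintro _ _ ⟨j, rfl, rfl⟩
    have key : Scon.mk' (substBase i a b (xBase j * yBase j)) = Scon.mk' (substBase i a b 0) := by
      rw [map_mul, substBase_x, substBase_y, map_zero]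
      split_ifs
      · rw [hab]
      · exact xS_mul_yS j
    exact key

lemma substS_mk (i : ℕ) (a b : BaseS) (hab : a * b = 0) (w : BaseS) :
    substS i a b hab (Scon.mk' w) = Scon.mk' (substBase i a b w) := rfl

/-- Every element of `S` involves only finitely many generators, so it is fixed by almost all of
the substitutions. -/
lemma eventually_substS_eq (a b : BaseS) (hab : a * b = 0) (s : Smon) :
    ∀ᶠ i in atTop, substS i a b hab s = s := by
  obtain ⟨w, rfl⟩ := Con.mk'_surjective s
  suffices h : ∀ᶠ i in atTop, substBase i a b w = w by
    filter_upwards [h] with i hi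
    rw [substS_mk, hi]
  induction w using WithZero.recZeroCoe with
  | zero => simp
  | coe w =>
    induction w using FreeMonoid.inductionOn with
    | one => exact Eventually.of_forall fun i => map_one (substBase i a b)
    | of g =>
      rcases g with j | j
      · filter_upwards [eventually_ne_atTop j] with i hi
        exact (substBase_x i a b j).trans (if_neg hi.symm)
      · filter_upwards [eventually_ne_atTop j] with i hi
        exact (substBase_y i a b j).trans (if_neg hi.symm)
    | mul u v hu hv =>
      filter_upwards [hu, hv] with i hi hiv
      rw [WithZero.coe_mul, map_mul, hi, hiv]

/-- If `z_i` is sent to `1` by the `i`-th substitution, then applying that substitution to `W(z_i)`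
gives `W(1)` for all large `i`. -/
lemma eventually_substS_eval (a b : BaseS) (hab : a * b = 0) (z : ℕ → Smon)
    (hz : ∀ i, substS i a b hab (z i) = 1) (W : Monoid.Coprod Smon (Multiplicative ℕ)) :
    ∀ᶠ i in atTop, substS i a b hab (monoidEval (z i) W) = monoidEval 1 W := by
  induction W using Monoid.Coprod.induction_on with
  | inl m =>
    filter_upwards [eventually_substS_eq a b hab m] with i hi
    simpa [monoidEval] using hi
  | inr n =>
    refine Eventually.of_forall fun i => ?_
    simp [monoidEval, powersHom_apply, hz]
  | mul U V hU hV =>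
    filter_upwards [hU, hV] with i hi hiv
    rw [map_mul, map_mul, map_mul, hi, hiv]

lemma tendsto_zariski_one (a b : BaseS) (hab : a * b = 0) (z : ℕ → Smon)
    (hz : ∀ i, substS i a b hab (z i) = 1) :
    Tendsto z atTop (@nhds Smon (zariskiSemigroup Smon) 1) := by
  refine TopologicalSpace.tendsto_nhds_generateFrom_iff.2 ?_
  rintro _ ⟨W, V, rfl⟩ h1
  filter_upwards [eventually_substS_eval a b hab z hz W,
    eventually_substS_eval a b hab z hz V] with i hW hV heq
  exact h1 (by rw [← hW, ← hV, heq])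

lemma isOpen_ne_zS : @IsOpen Smon (zariskiSemigroup Smon) {m | m ≠ zS} := by
  refine TopologicalSpace.isOpen_generateFrom_of_mem
    ⟨Monoid.Coprod.inr (Multiplicative.ofAdd 1), Monoid.Coprod.inl zS, ?_⟩
  simp [monoidEval, powersHom_apply]

/-- The multiplication map `S × S → S` is not continuous when `S` carries the semigroup
Zariski topology `Zar⁺(S)` and `S × S` the corresponding product topology; that is,
`Zar⁺(S)` is not a semigroup topology on `S`. -/
theorem zariskiSemigroup_not_semigroup_topology :
    ¬ @Continuous (Smon × Smon) Smon
        (@instTopologicalSpaceProd Smon Smon (zariskiSemigroup Smon) (zariskiSemigroup Smon))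
        (zariskiSemigroup Smon)
        (fun p : Smon × Smon => p.1 * p.2) := by
  intro hc
  let _ : TopologicalSpace Smon := zariskiSemigroup Smon
  have hx : Tendsto xS atTop (𝓝 1) := tendsto_zariski_one 1 0 (by simp) xS fun i => by
    rw [xS, substS_mk, substBase_x, if_pos rfl, map_one]
  have hy : Tendsto yS atTop (𝓝 1) := tendsto_zariski_one 0 1 (by simp) yS fun i => by
    rw [yS, substS_mk, substBase_y, if_pos rfl, map_one]
  have hxy : Tendsto (fun i => xS i * yS i) atTop (𝓝 (1 * 1)) :=
    (hc.tendsto ((1 : Smon), (1 : Smon))).comp (hx.prodMk_nhds hy)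
  rw [one_mul] at hxy
  obtain ⟨i, hi⟩ := (hxy.eventually (isOpen_ne_zS.mem_nhds one_ne_zS)).exists
  exact hi (xS_mul_yS i)
end
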